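/- Fix ρ ∈ (0,1) and α ∈ (0,1). Let (α_n) be a sequence in (0,1) with n·α_n → α, and let c_n be defined by Φ(−c_n) = α_n. Then (n(n−1)/2)·∫_ℝ Φ(d)^{n−2}·φ(d)·G(ρ,c_n,z)²·|φ(d) − d·Φ(−d)|·φ(z) dz → 0 as n → ∞, where d = d(ρ,c_n,z) and G(ρ,c,z) = (c + z/√ρ)/(2(1−ρ)^{3/2}). -/

import Mathlib

open MeasureTheory Filter

/-- The standard normal density. -/
noncomputable def phi (x : ℝ) : ℝ := (Real.sqrt (2 * Real.pi))⁻¹ * Real.exp (-x ^ 2 / 2)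

/-- The standard normal cumulative distribution function. -/
noncomputable def Phi (x : ℝ) : ℝ := ∫ t in Set.Iic x, phi t

/-- d(ρ,c,z) = (c + √ρ·z)/√(1−ρ). -/
noncomputable def dd (ρ c z : ℝ) : ℝ := (c + Real.sqrt ρ * z) / Real.sqrt (1 - ρ)

/-- G(ρ,c,z) = (c + z/√ρ)/(2(1−ρ)^{3/2}). -/
noncomputable def G (ρ c z : ℝ) : ℝ :=
  (c + z / Real.sqrt ρ) / (2 * (1 - ρ) ^ ((3 : ℝ) / 2))

/-- H_n(ρ,c) = ∫ Φ(d(ρ,c,z))^n φ(z) dz. -/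
noncomputable def Hn (n : ℕ) (ρ c : ℝ) : ℝ := ∫ z : ℝ, (Phi (dd ρ c z)) ^ n * phi z


lemma phi_eq (x : ℝ) : phi x = ProbabilityTheory.gaussianPDFReal 0 1 x := by
  simp [phi, ProbabilityTheory.gaussianPDFReal]

lemma phi_fun : phi = ProbabilityTheory.gaussianPDFReal 0 1 := funext phi_eq

lemma phi_int : Integrable phi := by
  rw [phi_fun]; exact ProbabilityTheory.integrable_gaussianPDFReal 0 1

lemma phi_total : ∫ x, phi x = 1 := by
  rw [phi_fun]; exact ProbabilityTheory.integral_gaussianPDFReal_eq_one 0 one_ne_zero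

lemma sqrt2pi : 1 ≤ Real.sqrt (2 * Real.pi) := by
  rw [Real.one_le_sqrt]; nlinarith [Real.pi_gt_three]

lemma phi_nonneg (x : ℝ) : 0 ≤ phi x := by unfold phi; positivity

lemma phi_le (x : ℝ) : phi x ≤ Real.exp (-x ^ 2 / 2) := by
  unfold phi
  have := inv_le_one_of_one_le₀ sqrt2pi
  nlinarith [Real.exp_pos (-x ^ 2 / 2)]

lemma phi_neg (x : ℝ) : phi (-x) = phi x := by simp [phi]

lemma Phi_nonneg (x : ℝ) : 0 ≤ Phi x := by
  unfold Phi; exact integral_nonneg phi_nonneg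

lemma Phi_mono {x y : ℝ} (h : x ≤ y) : Phi x ≤ Phi y := by
  unfold Phi
  exact setIntegral_mono_set phi_int.integrableOn (ae_of_all _ phi_nonneg)
    (Set.Iic_subset_Iic.2 h).eventuallyLE

lemma Phi_symm (x : ℝ) : Phi x = 1 - Phi (-x) := by
  have h1 : Phi (-x) = ∫ t in Set.Ioi x, phi t := by
    unfold Phi
    have := integral_comp_neg_Iic (-x) phi
    simp only [phi_neg, neg_neg] at this
    exact this
  have h2 := intervalIntegral.integral_Iic_add_Ioi (b := x) phi_int.integrableOn phi_int.integrableOn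
  rw [phi_total] at h2
  unfold Phi at *
  linarith

lemma Phi_lower (d : ℝ) : phi d ≤ Real.exp (3 / 2) * (1 + |d|) * Phi (-d) := by
  have ha := abs_nonneg d
  set h : ℝ := 1 / (1 + |d|) with hh
  have hpos : 0 < h := by positivity
  have hm : h * (1 + |d|) = 1 := by rw [hh]; field_simp
  have hle : h ≤ 1 := by nlinarith
  have key : h * (phi d * Real.exp (-(3 / 2))) ≤ Phi (-d) := by
    have h1 : ∫ t in Set.Ioc (-d - h) (-d), phi d * Real.exp (-(3 / 2))
        ≤ ∫ t in Set.Ioc (-d - h) (-d), phi t := by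
      apply setIntegral_mono_on (integrableOn_const (by simp)) phi_int.integrableOn measurableSet_Ioc
      intro t ht
      have h3 : |t| ≤ |d| + h := by
        rw [abs_le]
        have := neg_abs_le d
        have := le_abs_self d
        constructor <;> linarith [ht.1, ht.2]
      have h4 : t ^ 2 ≤ d ^ 2 + 3 := by
        rw [← sq_abs t, ← sq_abs d]
        nlinarith [abs_nonneg t]
      unfold phi
      rw [mul_assoc, ← Real.exp_add]
      gcongr
      linarith
    have h2 : ∫ t in Set.Ioc (-d - h) (-d), phi t ≤ Phi (-d) := by
      unfold Phi
      exact setIntegral_mono_set phi_int.integrableOn (ae_of_all _ phi_nonneg)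
        Set.Ioc_subset_Iic_self.eventuallyLE
    refine le_trans (le_of_eq ?_) (h1.trans h2)
    simp [hpos.le]
  have e : Real.exp (3 / 2) * Real.exp (-(3 / 2)) = 1 := by rw [← Real.exp_add]; simp
  calc phi d = Real.exp (3 / 2) * (1 + |d|) * (h * (phi d * Real.exp (-(3 / 2)))) := by
        linear_combination (-phi d) * e - phi d * Real.exp (3/2) * Real.exp (-(3/2)) * hm
    _ ≤ _ := by gcongr

lemma phi_pos (x : ℝ) : 0 < phi x := by
  unfold phi
  have := sqrt2pi
  positivity

lemma Phi_pos (x : ℝ) : 0 < Phi x := by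
  have := Phi_lower (-x)
  rw [neg_neg] at this
  by_contra hc
  have h0 : Phi x = 0 := le_antisymm (not_lt.1 hc) (Phi_nonneg x)
  rw [h0] at this
  linarith [phi_pos (-x)]

lemma Phi_upper {d : ℝ} (hd : 0 ≤ d) : Phi (-d) ≤ Real.exp (-d ^ 2 / 2) := by
  have hi : Integrable (fun t => Real.exp (-d ^ 2 / 2) * phi (t + d)) :=
    (phi_int.comp_add_right d).const_mul _
  calc Phi (-d) ≤ ∫ t in Set.Iic (-d), Real.exp (-d ^ 2 / 2) * phi (t + d) := by
        unfold Phi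
        apply setIntegral_mono_on phi_int.integrableOn hi.integrableOn measurableSet_Iic
        intro t ht
        have ht : t ≤ -d := ht
        unfold phi
        rw [mul_left_comm, ← Real.exp_add]
        gcongr
        nlinarith
    _ ≤ ∫ t, Real.exp (-d ^ 2 / 2) * phi (t + d) :=
        setIntegral_le_integral hi
          (ae_of_all _ fun t => mul_nonneg (Real.exp_pos _).le (phi_nonneg _))
    _ = Real.exp (-d ^ 2 / 2) := by
        rw [integral_const_mul, integral_add_right_eq_self phi d, phi_total, mul_one]

lemma Phi_pow_le (d : ℝ) (n : ℕ) (hn : 2 ≤ n) :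
    Phi d ^ (n - 2) ≤ Real.exp 2 * Real.exp (-(n * Phi (-d))) := by
  have h1 : Phi d ≤ Real.exp (-Phi (-d)) := by
    rw [Phi_symm d]; linarith [Real.add_one_le_exp (-Phi (-d))]
  have h2 : Phi (-d) ≤ 1 := by linarith [Phi_symm d, Phi_nonneg d]
  calc Phi d ^ (n - 2) ≤ Real.exp (-Phi (-d)) ^ (n - 2) :=
        pow_le_pow_left₀ (Phi_nonneg d) h1 _
    _ = Real.exp (((n - 2 : ℕ) : ℝ) * (-Phi (-d))) := by rw [Real.exp_nat_mul]
    _ ≤ _ := by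
        rw [← Real.exp_add]
        gcongr
        push_cast [hn]
        nlinarith

lemma abs_term (d : ℝ) : |phi d - d * Phi (-d)| ≤ phi d + |d| * Phi (-d) := by
  refine (abs_sub _ _).trans ?_
  rw [abs_mul, abs_of_nonneg (phi_nonneg d), abs_of_nonneg (Phi_nonneg (-d))]

/-- regime A -/
lemma boundA (d : ℝ) (n : ℕ) (hn : 2 ≤ n) :
    (n : ℝ) ^ 2 * (Phi d ^ (n - 2) * phi d * |phi d - d * Phi (-d)|) ≤
      (4 * Real.exp 2 * Real.exp (3 / 2) ^ 2) * (1 + |d|) ^ 2 := by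
  have ha := abs_nonneg d
  have hP := Phi_nonneg (-d)
  have hB : 1 ≤ Real.exp (3 / 2) := Real.one_le_exp (by norm_num)
  have h1 := Phi_lower d
  have h2 : |phi d - d * Phi (-d)| ≤ 2 * (Real.exp (3 / 2) * (1 + |d|) * Phi (-d)) := by
    have h3 : |d| * Phi (-d) ≤ Real.exp (3 / 2) * (1 + |d|) * Phi (-d) := by
      gcongr
      nlinarith
    linarith [abs_term d]
  have h4 : (n * Phi (-d)) ^ 2 * Real.exp (-(n * Phi (-d))) ≤ 2 := by
    have hx : 0 ≤ n * Phi (-d) := by positivity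
    have := Real.quadratic_le_exp_of_nonneg hx
    have e : Real.exp (n * Phi (-d)) * Real.exp (-(n * Phi (-d))) = 1 := by
      rw [← Real.exp_add]; simp
    have hp := Real.exp_pos (-(n * Phi (-d)))
    nlinarith
  calc (n : ℝ) ^ 2 * (Phi d ^ (n - 2) * phi d * |phi d - d * Phi (-d)|)
      ≤ (n : ℝ) ^ 2 * ((Real.exp 2 * Real.exp (-(n * Phi (-d)))) *
        (Real.exp (3 / 2) * (1 + |d|) * Phi (-d)) *
        (2 * (Real.exp (3 / 2) * (1 + |d|) * Phi (-d)))) := by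
        have := phi_nonneg d
        have := Phi_pow_le d n hn
        gcongr
    _ = (2 * Real.exp 2 * Real.exp (3 / 2) ^ 2 * (1 + |d|) ^ 2) *
        ((n * Phi (-d)) ^ 2 * Real.exp (-(n * Phi (-d)))) := by ring
    _ ≤ (2 * Real.exp 2 * Real.exp (3 / 2) ^ 2 * (1 + |d|) ^ 2) * 2 := by gcongr
    _ = _ := by ring

lemma boundN (c : ℝ) (n : ℕ) (h : n * Phi (-c) ≤ 1) :
    (n : ℝ) ^ 2 ≤ (Real.exp (3 / 2) * Real.sqrt (2 * Real.pi)) ^ 2 *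
      (1 + |c|) ^ 2 * Real.exp (c ^ 2) := by
  have h1 := Phi_lower c
  have h2 : n * phi c ≤ Real.exp (3 / 2) * (1 + |c|) := by
    calc n * phi c ≤ n * (Real.exp (3 / 2) * (1 + |c|) * Phi (-c)) := by gcongr
      _ = Real.exp (3 / 2) * (1 + |c|) * (n * Phi (-c)) := by ring
      _ ≤ Real.exp (3 / 2) * (1 + |c|) * 1 := by gcongr
      _ = _ := by ring
  have hs := sqrt2pi
  have e : phi c * (Real.sqrt (2 * Real.pi) * Real.exp (c ^ 2 / 2)) = 1 := by
    unfold phi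
    have : Real.exp (-c ^ 2 / 2) * Real.exp (c ^ 2 / 2) = 1 := by
      rw [← Real.exp_add]; ring_nf; simp
    rw [mul_comm (Real.sqrt (2 * Real.pi))⁻¹, mul_assoc, ← mul_assoc _⁻¹,
      inv_mul_cancel₀ (by positivity), one_mul, this]
  have h3 : (n : ℝ) ≤ Real.exp (3 / 2) * (1 + |c|) *
      (Real.sqrt (2 * Real.pi) * Real.exp (c ^ 2 / 2)) := by
    calc (n : ℝ) = n * phi c * (Real.sqrt (2 * Real.pi) * Real.exp (c ^ 2 / 2)) := by
          rw [mul_assoc, e, mul_one]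
      _ ≤ _ := by gcongr
  have e2 : Real.exp (c ^ 2) = Real.exp (c ^ 2 / 2) ^ 2 := by
    rw [← Real.exp_nat_mul]; congr 1; push_cast; ring
  calc (n : ℝ) ^ 2 ≤ _ := pow_le_pow_left₀ (by positivity) h3 2
    _ = _ := by rw [e2]; ring

/-- regime B -/
lemma boundB {d : ℝ} (hd : 0 ≤ d) (n : ℕ) :
    Phi d ^ (n - 2) * phi d * |phi d - d * Phi (-d)| ≤ (1 + |d|) * Real.exp (-d ^ 2) := by
  have h0 : Phi d ^ (n - 2) ≤ 1 := by
    apply pow_le_one₀ (Phi_nonneg d)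
    linarith [Phi_symm d, Phi_nonneg (-d)]
  have h1 := phi_le d
  have h2 : |phi d - d * Phi (-d)| ≤ (1 + |d|) * Real.exp (-d ^ 2 / 2) := by
    have := mul_le_mul_of_nonneg_left (Phi_upper hd) (abs_nonneg d)
    linarith [abs_term d]
  have e2 : Real.exp (-d ^ 2) = Real.exp (-d ^ 2 / 2) ^ 2 := by
    rw [← Real.exp_nat_mul]; congr 1; push_cast; ring
  calc Phi d ^ (n - 2) * phi d * |phi d - d * Phi (-d)|
      ≤ 1 * Real.exp (-d ^ 2 / 2) * ((1 + |d|) * Real.exp (-d ^ 2 / 2)) := by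
        have := phi_nonneg d
        gcongr
    _ = _ := by rw [e2]; ring

lemma polyexp (ε : ℝ) (hε : 0 < ε) :
    ∃ K : ℝ, 0 < K ∧ ∀ u : ℝ, 0 ≤ u → (1 + u) ^ 3 ≤ K * Real.exp (ε * u) := by
  refine ⟨(6 / ε ^ 3) * Real.exp ε, by positivity, fun u hu => ?_⟩
  have := Real.pow_div_factorial_le_exp (ε * (1 + u)) (by positivity) 3
  have e : Real.exp (ε * (1 + u)) = Real.exp ε * Real.exp (ε * u) := by
    rw [← Real.exp_add]; congr 1; ring
  rw [e] at this
  have h6 : ((Nat.factorial 3 : ℕ) : ℝ) = 6 := by norm_num [Nat.factorial]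
  rw [h6] at this
  calc (1 + u) ^ 3 = (6 / ε ^ 3) * ((ε * (1 + u)) ^ 3 / 6) := by field_simp
    _ ≤ (6 / ε ^ 3) * (Real.exp ε * Real.exp (ε * u)) := by gcongr
    _ = _ := by ring

lemma G_bound (ρ : ℝ) (hρ : ρ ∈ Set.Ioo (0:ℝ) 1) :
    ∃ K : ℝ, 0 < K ∧ ∀ c z : ℝ, G ρ c z ^ 2 ≤ K * (1 + (c ^ 2 + z ^ 2)) := by
  obtain ⟨h0, h1⟩ := hρ
  have hw : 0 < 2 * (1 - ρ) ^ ((3 : ℝ) / 2) := by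
    have : 0 < 1 - ρ := by linarith
    positivity
  have hr : 0 < Real.sqrt ρ := Real.sqrt_pos.2 h0
  unfold G
  set w := 2 * (1 - ρ) ^ ((3 : ℝ) / 2)
  set r := Real.sqrt ρ
  refine ⟨2 * (1 + (1 / r) ^ 2) / w ^ 2, by positivity, fun c z => ?_⟩
  rw [div_pow, div_mul_eq_mul_div]
  gcongr
  have : z / r = (1 / r) * z := by ring
  rw [this]
  nlinarith [sq_nonneg (c - 1 / r * z), sq_nonneg (1 / r * c), sq_nonneg (1 / r), sq_nonneg c, sq_nonneg z]

lemma d_bound (ρ : ℝ) (hρ : ρ ∈ Set.Ioo (0:ℝ) 1) :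
    ∃ K : ℝ, 0 < K ∧ ∀ c z : ℝ, (1 + |dd ρ c z|) ^ 2 ≤ K * (1 + (c ^ 2 + z ^ 2)) := by
  obtain ⟨h0, h1⟩ := hρ
  have hs : 0 < Real.sqrt (1 - ρ) := Real.sqrt_pos.2 (by linarith)
  unfold dd
  set s := Real.sqrt (1 - ρ)
  set r := Real.sqrt ρ
  refine ⟨2 + 4 * (1 + r ^ 2) / s ^ 2, by positivity, fun c z => ?_⟩
  have e1 : (1 + |(c + r * z) / s|) ^ 2 ≤ 2 + 2 * ((c + r * z) / s) ^ 2 := by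
    rw [← sq_abs ((c + r * z) / s)]
    nlinarith [sq_nonneg (1 - |(c + r * z) / s|)]
  have e2 : (c + r * z) ^ 2 ≤ 2 * ((1 + r ^ 2) * (1 + (c ^ 2 + z ^ 2))) := by
    nlinarith [sq_nonneg (c - r * z), sq_nonneg (r * c), sq_nonneg r, sq_nonneg c, sq_nonneg z]
  have e3 : ((c + r * z) / s) ^ 2 ≤ 2 * ((1 + r ^ 2) * (1 + (c ^ 2 + z ^ 2))) / s ^ 2 := by
    rw [div_pow]; gcongr
  have e4 : (2 + 4 * (1 + r ^ 2) / s ^ 2) * (1 + (c ^ 2 + z ^ 2)) =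
      2 * (1 + (c ^ 2 + z ^ 2)) + 2 * (2 * ((1 + r ^ 2) * (1 + (c ^ 2 + z ^ 2))) / s ^ 2) := by
    ring
  rw [e4]
  nlinarith [sq_nonneg c, sq_nonneg z]

/-- core pointwise bound -/
lemma core (ρ : ℝ) (hρ : ρ ∈ Set.Ioo (0:ℝ) 1) :
    ∃ K η : ℝ, 0 < K ∧ 0 < η ∧ ∀ (n : ℕ) (c z : ℝ), 2 ≤ n → 0 ≤ c → n * Phi (-c) ≤ 1 →
      (n : ℝ) ^ 2 * (Phi (dd ρ c z) ^ (n - 2) * phi (dd ρ c z) *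
        |phi (dd ρ c z) - dd ρ c z * Phi (-(dd ρ c z))|) * phi z ≤
      K * (1 + (c ^ 2 + z ^ 2)) ^ 2 * (Real.exp (-η * c ^ 2) * Real.exp (-z ^ 2 / 4)) := by
  obtain ⟨Kd, hKd, hd⟩ := d_bound ρ hρ
  obtain ⟨h0, h1⟩ := hρ
  have hs : 0 < Real.sqrt (1 - ρ) := Real.sqrt_pos.2 (by linarith)
  have hs1 : Real.sqrt (1 - ρ) < 1 := by
    rw [Real.sqrt_lt' one_pos]; linarith
  have hr : 0 < Real.sqrt ρ := Real.sqrt_pos.2 h0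
  have hdd : ∀ c z, dd ρ c z = (c + Real.sqrt ρ * z) / Real.sqrt (1 - ρ) := fun _ _ => rfl
  set s := Real.sqrt (1 - ρ)
  set r := Real.sqrt ρ
  set δ : ℝ := (1 - s) / (2 * r) with hδ
  have hδpos : 0 < δ := div_pos (by linarith) (by positivity)
  have hrδ : r * δ = (1 - s) / 2 := by rw [hδ]; field_simp
  set κ : ℝ := (1 + s) / (2 * s) with hκ
  have hκ1 : 1 < κ := by rw [hκ, lt_div_iff₀ (by positivity)]; linarith
  set CA := 4 * Real.exp 2 * Real.exp (3 / 2) ^ 2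
  set CN := (Real.exp (3 / 2) * Real.sqrt (2 * Real.pi)) ^ 2
  have hCA : 0 < CA := by positivity
  have hCN : 0 < CN := by have := sqrt2pi; positivity
  have hbA : ∀ (d : ℝ) (n : ℕ), 2 ≤ n →
    (n : ℝ) ^ 2 * (Phi d ^ (n - 2) * phi d * |phi d - d * Phi (-d)|) ≤ CA * (1 + |d|) ^ 2 :=
    boundA
  have hbN : ∀ (c : ℝ) (n : ℕ), n * Phi (-c) ≤ 1 →
    (n : ℝ) ^ 2 ≤ CN * (1 + |c|) ^ 2 * Real.exp (c ^ 2) := boundN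
  clear_value CA CN
  set η := min (δ ^ 2 / 4) (κ ^ 2 - 1) with hη
  have hηpos : 0 < η := lt_min (by positivity) (by nlinarith)
  refine ⟨CA * Kd + 2 * CN * Kd, η, by positivity, hηpos, fun n c z hn hc hnc => ?_⟩
  have hP : 1 ≤ 1 + (c ^ 2 + z ^ 2) := by nlinarith [sq_nonneg c, sq_nonneg z]
  have hdz := hd c z
  set P := 1 + (c ^ 2 + z ^ 2) with hPdef
  set d := dd ρ c z with hddef
  clear_value P
  have hE : 0 < Real.exp (-η * c ^ 2) * Real.exp (-z ^ 2 / 4) := by positivity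
  rcases le_or_gt (δ * c) |z| with hz | hz
  · have hexp : phi z ≤ Real.exp (-η * c ^ 2) * Real.exp (-z ^ 2 / 4) := by
      refine (phi_le z).trans ?_
      rw [← Real.exp_add]
      gcongr
      have : (δ * c) ^ 2 ≤ z ^ 2 := by
        rw [← sq_abs z]; gcongr
      have h3 : η * c ^ 2 ≤ δ ^ 2 / 4 * c ^ 2 := by
        gcongr; exact min_le_left _ _
      nlinarith
    calc _ ≤ (CA * (1 + |d|) ^ 2) * (Real.exp (-η * c ^ 2) * Real.exp (-z ^ 2 / 4)) :=
          mul_le_mul (hbA d n hn) hexp (phi_nonneg z) (by positivity)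
      _ ≤ (CA * Kd + 2 * CN * Kd) * P ^ 2 * (Real.exp (-η * c ^ 2) * Real.exp (-z ^ 2 / 4)) := by
          refine mul_le_mul_of_nonneg_right ?_ hE.le
          calc CA * (1 + |d|) ^ 2 ≤ CA * (Kd * P) := by gcongr
            _ ≤ CA * (Kd * P ^ 2) := by gcongr; nlinarith
            _ ≤ CA * (Kd * P ^ 2) + 2 * CN * Kd * P ^ 2 := by
                have : 0 ≤ 2 * CN * Kd * P ^ 2 := by positivity
                linarith
            _ = _ := by ring
  · have hdge : κ * c ≤ d := by
      rw [hddef, hdd, hκ, le_div_iff₀ hs]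
      have hz' : -(δ * c) ≤ z := by linarith [neg_abs_le z]
      have : r * (-(δ * c)) ≤ r * z := by gcongr
      have e : (1 + s) / (2 * s) * c * s = (1 + s) / 2 * c := by field_simp
      rw [e]
      nlinarith
    have hκc : 0 ≤ κ * c := by positivity
    have hd0 : 0 ≤ d := hκc.trans hdge
    have hd2 : (κ * c) ^ 2 ≤ d ^ 2 := by gcongr
    have hexp : Real.exp (c ^ 2) * Real.exp (-d ^ 2) * phi z ≤
        Real.exp (-η * c ^ 2) * Real.exp (-z ^ 2 / 4) := by
      refine (mul_le_mul_of_nonneg_left (phi_le z) (by positivity)).trans ?_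
      rw [← Real.exp_add, ← Real.exp_add, ← Real.exp_add]
      apply Real.exp_le_exp.2
      have h3 : η * c ^ 2 ≤ (κ ^ 2 - 1) * c ^ 2 := by
        gcongr; exact min_le_right _ _
      have h4 := sq_nonneg z
      have h5 : (κ * c) ^ 2 = κ ^ 2 * c ^ 2 := by ring
      rw [h5] at hd2
      linarith
    have hcP : (1 + |c|) ^ 2 ≤ 2 * P := by
      have h3 := sq_nonneg (1 - |c|)
      have h4 := sq_abs c
      have h5 := sq_nonneg z
      rw [hPdef]
      linarith
    have hdP : 1 + |d| ≤ Kd * P := by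
      have h3 := abs_nonneg d
      have h4 := sq_nonneg |d|
      have h5 : (1 + |d|) ^ 2 = 1 + 2 * |d| + |d| ^ 2 := by ring
      linarith
    calc _ ≤ (CN * (1 + |c|) ^ 2 * Real.exp (c ^ 2)) *
            ((1 + |d|) * Real.exp (-d ^ 2)) * phi z := by
          refine mul_le_mul_of_nonneg_right ?_ (phi_nonneg z)
          refine mul_le_mul (hbN c n hnc) (boundB hd0 n) ?_ (by positivity)
          have := phi_nonneg d
          have := Phi_nonneg d
          positivity
      _ = (CN * (1 + |c|) ^ 2 * (1 + |d|)) *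
            (Real.exp (c ^ 2) * Real.exp (-d ^ 2) * phi z) := by ring
      _ ≤ (CN * (2 * P) * (Kd * P)) * (Real.exp (-η * c ^ 2) * Real.exp (-z ^ 2 / 4)) := by
          have := phi_nonneg z
          gcongr
      _ ≤ (CA * Kd + 2 * CN * Kd) * P ^ 2 * (Real.exp (-η * c ^ 2) * Real.exp (-z ^ 2 / 4)) := by
          refine mul_le_mul_of_nonneg_right ?_ hE.le
          have : 0 ≤ CA * Kd * P ^ 2 := by positivity
          linarith

lemma final_pt (ρ : ℝ) (hρ : ρ ∈ Set.Ioo (0:ℝ) 1) :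
    ∃ K η : ℝ, 0 < K ∧ 0 < η ∧ ∀ (n : ℕ) (c z : ℝ), 2 ≤ n → 0 ≤ c → n * Phi (-c) ≤ 1 →
      (n : ℝ) ^ 2 * ((Phi (dd ρ c z)) ^ (n - 2) * phi (dd ρ c z) *
            (G ρ c z) ^ 2 *
            |phi (dd ρ c z) - dd ρ c z * Phi (-(dd ρ c z))| * phi z) ≤
      K * Real.exp (-η * c ^ 2) * Real.exp (-(1 / 8) * z ^ 2) := by
  obtain ⟨K1, η, hK1, hη, hcore⟩ := core ρ hρ
  obtain ⟨K2, hK2, hG⟩ := G_bound ρ hρ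
  obtain ⟨K3, hK3, hp⟩ := polyexp (min (η / 2) (1 / 8)) (lt_min (by positivity) (by norm_num))
  refine ⟨K1 * K2 * K3, η / 2, by positivity, by positivity, fun n c z hn hc hnc => ?_⟩
  have hu : 0 ≤ c ^ 2 + z ^ 2 := by positivity
  have h1 := hcore n c z hn hc hnc
  have h2 := hG c z
  have h3 := hp _ hu
  set P := 1 + (c ^ 2 + z ^ 2)
  have hPpos : 0 < P := by positivity
  set ε := min (η / 2) (1 / 8)
  calc _ = ((n : ℝ) ^ 2 * (Phi (dd ρ c z) ^ (n - 2) * phi (dd ρ c z) *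
        |phi (dd ρ c z) - dd ρ c z * Phi (-(dd ρ c z))|) * phi z) * G ρ c z ^ 2 := by ring
    _ ≤ (K1 * P ^ 2 * (Real.exp (-η * c ^ 2) * Real.exp (-z ^ 2 / 4))) * (K2 * P) := by
        gcongr
    _ = K1 * K2 * (Real.exp (-η * c ^ 2) * Real.exp (-z ^ 2 / 4)) * P ^ 3 := by ring
    _ ≤ K1 * K2 * (Real.exp (-η * c ^ 2) * Real.exp (-z ^ 2 / 4)) *
        (K3 * Real.exp (ε * (c ^ 2 + z ^ 2))) := by gcongr
    _ = K1 * K2 * K3 * (Real.exp (-η * c ^ 2) * Real.exp (-z ^ 2 / 4) *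
        Real.exp (ε * (c ^ 2 + z ^ 2))) := by ring
    _ ≤ K1 * K2 * K3 * (Real.exp (-(η / 2) * c ^ 2) * Real.exp (-(1 / 8) * z ^ 2)) := by
        rw [← Real.exp_add, ← Real.exp_add, ← Real.exp_add]
        refine mul_le_mul_of_nonneg_left (Real.exp_le_exp.2 ?_) (by positivity)
        have a1 : ε * c ^ 2 ≤ η / 2 * c ^ 2 := by gcongr; exact min_le_left _ _
        have a2 : ε * z ^ 2 ≤ 1 / 8 * z ^ 2 := by gcongr; exact min_le_right _ _
        linarith
    _ = _ := by ring

theorem approximation_error_tendsto_zero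
    (ρ : ℝ) (hρ : ρ ∈ Set.Ioo (0:ℝ) 1) (α : ℝ) (hα : α ∈ Set.Ioo (0:ℝ) 1)
    (αseq : ℕ → ℝ) (hαseq : ∀ n, αseq n ∈ Set.Ioo (0:ℝ) 1)
    (hlim : Tendsto (fun n : ℕ => (n : ℝ) * αseq n) atTop (nhds α))
    (c : ℕ → ℝ) (hc : ∀ n, Phi (-(c n)) = αseq n) :
    Tendsto (fun n : ℕ =>
        ((n : ℝ) * ((n : ℝ) - 1) / 2) *
          ∫ z : ℝ, (Phi (dd ρ (c n) z)) ^ (n - 2) * phi (dd ρ (c n) z) *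
            (G ρ (c n) z) ^ 2 *
            |phi (dd ρ (c n) z) - dd ρ (c n) z * Phi (-(dd ρ (c n) z))| * phi z)
      atTop (nhds 0) := by
  obtain ⟨K, η, hK, hη, hpt⟩ := final_pt ρ hρ
  have hsmall : ∀ᶠ n : ℕ in atTop, (n : ℝ) * αseq n ≤ 1 :=
    (hlim.eventually_lt_const hα.2).mono fun n h => h.le
  have hctop : Tendsto c atTop atTop := by
    rw [tendsto_atTop]
    intro M
    have hM := Phi_pos (-M)
    have hbig : ∀ᶠ n : ℕ in atTop, 1 / Phi (-M) < (n : ℝ) :=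
      tendsto_natCast_atTop_atTop.eventually_gt_atTop _
    filter_upwards [hsmall, hbig] with n h1 h2
    by_contra hlt
    push Not at hlt
    have h3 : Phi (-M) ≤ αseq n := by rw [← hc n]; exact Phi_mono (by linarith)
    rw [div_lt_iff₀ hM] at h2
    have : (n : ℝ) * Phi (-M) ≤ n * αseq n := by gcongr
    linarith
  have hint : Integrable (fun z : ℝ => Real.exp (-(1 / 8) * z ^ 2)) :=
    integrable_exp_neg_mul_sq (by norm_num)
  have hlim0 : Tendsto (fun n => (K * ∫ z : ℝ, Real.exp (-(1 / 8) * z ^ 2)) *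
      Real.exp (-η * c n ^ 2)) atTop (nhds 0) := by
    rw [← mul_zero (K * ∫ z : ℝ, Real.exp (-(1 / 8) * z ^ 2))]
    refine Tendsto.const_mul _ (Real.tendsto_exp_atBot.comp ?_)
    exact ((tendsto_pow_atTop two_ne_zero).comp hctop).const_mul_atTop_of_neg (by linarith)
  have hnn : ∀ n z, 0 ≤ (Phi (dd ρ (c n) z)) ^ (n - 2) * phi (dd ρ (c n) z) *
            (G ρ (c n) z) ^ 2 *
            |phi (dd ρ (c n) z) - dd ρ (c n) z * Phi (-(dd ρ (c n) z))| * phi z := by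
    intro n z
    have := Phi_nonneg (dd ρ (c n) z)
    have := phi_nonneg (dd ρ (c n) z)
    have := phi_nonneg z
    positivity
  refine tendsto_of_tendsto_of_tendsto_of_le_of_le' tendsto_const_nhds hlim0 ?_ ?_
  · filter_upwards [eventually_ge_atTop 2] with n hn
    have hn' : (2 : ℝ) ≤ n := by exact_mod_cast hn
    have : 0 ≤ (n : ℝ) - 1 := by linarith
    exact mul_nonneg (by positivity) (integral_nonneg (hnn n))
  · filter_upwards [eventually_ge_atTop 2, hsmall, hctop.eventually_ge_atTop 0] with n hn h1 h2
    have hn' : (2 : ℝ) ≤ n := by exact_mod_cast hn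
    calc _ ≤ (n : ℝ) ^ 2 * ∫ z : ℝ, (Phi (dd ρ (c n) z)) ^ (n - 2) * phi (dd ρ (c n) z) *
            (G ρ (c n) z) ^ 2 *
            |phi (dd ρ (c n) z) - dd ρ (c n) z * Phi (-(dd ρ (c n) z))| * phi z := by
          refine mul_le_mul_of_nonneg_right ?_ (integral_nonneg (hnn n))
          nlinarith
      _ = ∫ z : ℝ, (n : ℝ) ^ 2 * ((Phi (dd ρ (c n) z)) ^ (n - 2) * phi (dd ρ (c n) z) *
            (G ρ (c n) z) ^ 2 *
            |phi (dd ρ (c n) z) - dd ρ (c n) z * Phi (-(dd ρ (c n) z))| * phi z) := by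
          rw [integral_const_mul]
      _ ≤ ∫ z : ℝ, K * Real.exp (-η * c n ^ 2) * Real.exp (-(1 / 8) * z ^ 2) := by
          refine integral_mono_of_nonneg
            (ae_of_all _ fun z => mul_nonneg (by positivity) (hnn n z))
            (hint.const_mul _) (ae_of_all _ fun z => ?_)
          exact hpt n (c n) z hn h2 (by rw [hc n]; exact h1)
      _ = _ := by rw [integral_const_mul]; ring
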